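/- There exists a constant C > 0 such that for every positive integer M, setting N = M³ and σ = M, and for every function u that is four times continuously differentiable on a neighbourhood of [0,1]² and vanishes on the boundary of [0,1]², the two-scale interpolant satisfies |||u − Î_{N,N}u||| ≤ C N^{−1} (|u|₂ + ‖∂⁴u/∂x²∂y²‖_{0,Ω}). -/

import Mathlib

open MeasureTheory Finset

noncomputable section

/-- The hat function `ψ_i^N` on the uniform mesh of `[0,1]` with `N` intervals. -/
def hat (N i : ℕ) (x : ℝ) : ℝ :=
  if ((i : ℝ) - 1) / N ≤ x ∧ x ≤ (i : ℝ) / N then N * (x - ((i : ℝ) - 1) / N)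
  else if (i : ℝ) / N ≤ x ∧ x ≤ ((i : ℝ) + 1) / N then N * (((i : ℝ) + 1) / N - x)
  else 0

/-- The nodal piecewise bilinear interpolant `I_{Nx,Ny} u`. -/
def interp (Nx Ny : ℕ) (u : ℝ × ℝ → ℝ) : ℝ × ℝ → ℝ := fun p =>
  ∑ i ∈ range (Nx + 1), ∑ j ∈ range (Ny + 1),
    u ((i : ℝ) / Nx, (j : ℝ) / Ny) * hat Nx i p.1 * hat Ny j p.2

/-- The one-directional interpolant `I_{Nx,0} u` (interpolation in the `x`-direction only). -/
def interpX (Nx : ℕ) (u : ℝ × ℝ → ℝ) : ℝ × ℝ → ℝ := fun p =>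
  ∑ i ∈ range (Nx + 1), u ((i : ℝ) / Nx, p.2) * hat Nx i p.1

/-- The one-directional interpolant `I_{0,Ny} u` (interpolation in the `y`-direction only). -/
def interpY (Ny : ℕ) (u : ℝ × ℝ → ℝ) : ℝ × ℝ → ℝ := fun p =>
  ∑ j ∈ range (Ny + 1), u (p.1, (j : ℝ) / Ny) * hat Ny j p.2

/-- The two-scale interpolant `Î_{N,N} u = I_{N,σ}u + I_{σ,N}u − I_{σ,σ}u`. -/
def twoScale (N σ : ℕ) (u : ℝ × ℝ → ℝ) : ℝ × ℝ → ℝ := fun p =>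
  interp N σ u p + interp σ N u p - interp σ σ u p

/-- The multiscale interpolant
`I^{(k)}_{N,N} u = Σ_{i=0}^{k} I_{N/2^i, N/2^{k−i}}u − Σ_{i=1}^{k} I_{N/2^i, N/2^{k+1−i}}u`. -/
def msInterp (N k : ℕ) (u : ℝ × ℝ → ℝ) : ℝ × ℝ → ℝ := fun p =>
  ∑ i ∈ range (k + 1), interp (N / 2 ^ i) (N / 2 ^ (k - i)) u p
    - ∑ i ∈ Finset.Icc 1 k, interp (N / 2 ^ i) (N / 2 ^ (k + 1 - i)) u p

/-- The closed square `[0,1]²`. -/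
def unitSquare : Set (ℝ × ℝ) := Set.Icc (0 : ℝ) 1 ×ˢ Set.Icc (0 : ℝ) 1

/-- The open square `Ω = (0,1)²`. -/
def Omega2 : Set (ℝ × ℝ) := Set.Ioo (0 : ℝ) 1 ×ˢ Set.Ioo (0 : ℝ) 1

/-- Partial derivative in `x` (defined a.e. for Lipschitz functions; junk value `0` elsewhere). -/
def pderivX (v : ℝ × ℝ → ℝ) : ℝ × ℝ → ℝ := fun p => deriv (fun x => v (x, p.2)) p.1

/-- Partial derivative in `y` (defined a.e. for Lipschitz functions; junk value `0` elsewhere). -/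
def pderivY (v : ℝ × ℝ → ℝ) : ℝ × ℝ → ℝ := fun p => deriv (fun y => v (p.1, y)) p.2

/-- The `L²(Ω)` norm `‖v‖_{0,Ω}`. -/
def L2norm (v : ℝ × ℝ → ℝ) : ℝ := Real.sqrt (∫ p in Omega2, (v p) ^ 2)

/-- The energy norm `|||v||| = (∫_Ω |∇v|² + ∫_Ω v²)^{1/2}`, gradients taken a.e. -/
def energyNorm (v : ℝ × ℝ → ℝ) : ℝ :=
  Real.sqrt (∫ p in Omega2, ((pderivX v p) ^ 2 + (pderivY v p) ^ 2 + (v p) ^ 2))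

/-- `u` is four times continuously differentiable on a neighbourhood of `[0,1]²`. -/
def C4Near (u : ℝ × ℝ → ℝ) : Prop :=
  ∃ U : Set (ℝ × ℝ), IsOpen U ∧ unitSquare ⊆ U ∧ ContDiffOn ℝ 4 u U

/-- `u` vanishes on the boundary of `[0,1]²`. -/
def VanishOnBoundary (u : ℝ × ℝ → ℝ) : Prop :=
  ∀ p ∈ unitSquare, (p.1 = 0 ∨ p.1 = 1 ∨ p.2 = 0 ∨ p.2 = 1) → u p = 0

/-- The seminorm `|u|₂ = ‖u_xx‖_{0,Ω} + ‖u_xy‖_{0,Ω} + ‖u_yy‖_{0,Ω}`. -/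
def semi2 (u : ℝ × ℝ → ℝ) : ℝ :=
  L2norm (pderivX (pderivX u)) + L2norm (pderivX (pderivY u)) + L2norm (pderivY (pderivY u))

/-- The mixed fourth derivative `∂⁴u/∂x²∂y²`. -/
def uxxyy (u : ℝ × ℝ → ℝ) : ℝ × ℝ → ℝ := pderivX (pderivX (pderivY (pderivY u)))

/-- The bilinear form `B(v,w) = ∫_Ω ∇v·∇w + ∫_Ω v w`, gradients taken a.e. -/
def Bform (v w : ℝ × ℝ → ℝ) : ℝ :=
  ∫ p in Omega2, (pderivX v p * pderivX w p + pderivY v p * pderivY w p + v p * w p)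

/-! ### One-dimensional interpolation -/

theorem hat_eq {n : ℕ} (hn : 0 < n) (i : ℕ) (x : ℝ) :
    hat n i x = if (i : ℝ) - 1 ≤ n * x ∧ n * x ≤ i then n * x - (i - 1)
      else if (i : ℝ) ≤ n * x ∧ n * x ≤ i + 1 then i + 1 - n * x else 0 := by
  have h : (0 : ℝ) < n := by exact_mod_cast hn
  have e1 : ∀ a : ℝ, a / n ≤ x ↔ a ≤ n * x := fun a => by rw [div_le_iff₀ h, mul_comm]
  have e2 : ∀ a : ℝ, x ≤ a / n ↔ n * x ≤ a := fun a => by rw [le_div_iff₀ h, mul_comm]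
  have e3 : ∀ a : ℝ, (n : ℝ) * (a / n) = a := fun a => by field_simp
  simp only [hat, e1, e2, mul_sub, e3]

/-- On a mesh cell the nodal interpolant is the affine function through the end values. -/
theorem sum_mul_hat_eq {n k : ℕ} (hk : k < n) {x : ℝ} (h1 : (k : ℝ) ≤ n * x)
    (h2 : n * x ≤ (k : ℝ) + 1) (f : ℝ → ℝ) :
    ∑ i ∈ range (n + 1), f ((i : ℝ) / n) * hat n i x =
      f ((k : ℝ) / n) * (k + 1 - n * x) + f (((k : ℝ) + 1) / n) * (n * x - k) := by
  have hn : 0 < n := by omega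
  rw [Finset.sum_eq_add k (k + 1) (by omega)]
  · have e1 : hat n k x = k + 1 - n * x := by
      rw [hat_eq hn]
      split_ifs with h h'
      · linarith [h.2]
      · rfl
      · exact absurd ⟨h1, h2⟩ h'
    have e2 : hat n (k + 1) x = n * x - k := by
      rw [hat_eq hn, if_pos]
      · push_cast; ring
      · push_cast; constructor <;> linarith
    rw [e1, e2]; push_cast; rfl
  · intro c _ hc
    have : hat n c x = 0 := by
      rw [hat_eq hn]
      rcases lt_or_gt_of_ne hc.1 with h | h
      · have h' : (c : ℝ) + 1 ≤ k := by exact_mod_cast h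
        split_ifs with h3 h4
        · linarith [h3.2]
        · linarith [h4.2]
        · rfl
      · have h' : (k : ℝ) + 1 + 1 ≤ c := by
          have : k + 1 + 1 ≤ c := by omega
          exact_mod_cast this
        split_ifs with h3 h4
        · linarith [h3.1]
        · linarith [h4.1]
        · rfl
    rw [this, mul_zero]
  · intro h; exact absurd (Finset.mem_range.2 (by omega)) h
  · intro h; exact absurd (Finset.mem_range.2 (by omega)) h

/-- The averaging kernel of the uniform mesh of width `1 / n`. -/
def cellKer (n : ℕ) (x s : ℝ) : ENNReal := if ⌊(n : ℝ) * x⌋ = ⌊(n : ℝ) * s⌋ then n else 0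

/-- The average of `w` over the cell of the uniform mesh of width `1 / n` that contains `x`. -/
def cellAvg (n : ℕ) (w : ℝ → ENNReal) (x : ℝ) : ENNReal := ∫⁻ s, cellKer n x s * w s

theorem measurable_cellKer (n : ℕ) : Measurable fun p : ℝ × ℝ => cellKer n p.1 p.2 := by
  unfold cellKer
  refine Measurable.ite (measurableSet_eq_fun ?_ ?_) measurable_const measurable_const
  · exact (measurable_fst.const_mul _).floor
  · exact (measurable_snd.const_mul _).floor

theorem lintegral_cellKer {n : ℕ} (hn : 0 < n) (s : ℝ) : ∫⁻ x, cellKer n x s = 1 := by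
  have h : (0 : ℝ) < n := by exact_mod_cast hn
  have : (fun x => cellKer n x s) = (Set.Ico ((⌊(n : ℝ) * s⌋ : ℝ) / n)
      (((⌊(n : ℝ) * s⌋ : ℝ) + 1) / n)).indicator fun _ => (n : ENNReal) := by
    ext x
    have : ⌊(n : ℝ) * x⌋ = ⌊(n : ℝ) * s⌋ ↔
        x ∈ Set.Ico ((⌊(n : ℝ) * s⌋ : ℝ) / n) (((⌊(n : ℝ) * s⌋ : ℝ) + 1) / n) := by
      rw [Int.floor_eq_iff, Set.mem_Ico, div_le_iff₀ h, lt_div_iff₀ h, mul_comm x]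
    simp only [cellKer, Set.indicator, this]
  rw [this, lintegral_indicator_const measurableSet_Ico, Real.volume_Ico, ← sub_div,
    add_sub_cancel_left, ENNReal.ofReal_div_of_pos h, ENNReal.ofReal_one, ENNReal.ofReal_natCast,
    one_div]
  exact ENNReal.mul_inv_cancel (by exact_mod_cast hn.ne') (ENNReal.natCast_ne_top n)

theorem cellAvg_mono (n : ℕ) {v w : ℝ → ENNReal} (h : ∀ s, v s ≤ w s) (x : ℝ) :
    cellAvg n v x ≤ cellAvg n w x :=
  lintegral_mono fun s => mul_le_mul_right (h s) _

theorem cellAvg_const_mul (n : ℕ) {c : ENNReal} (hc : c ≠ ⊤) (w : ℝ → ENNReal) (x : ℝ) :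
    cellAvg n (fun s => c * w s) x = c * cellAvg n w x := by
  unfold cellAvg
  rw [← lintegral_const_mul' _ _ hc]
  exact lintegral_congr fun s => by ring

/-- The square of `g` on `(0,1)`, extended by zero. -/
def unitSq (g : ℝ → ℝ) : ℝ → ENNReal :=
  (Set.Ioo (0 : ℝ) 1).indicator fun s => ENNReal.ofReal (g s ^ 2)

theorem sq_integral_abs_le {a b : ℝ} (hab : a < b) {g : ℝ → ℝ} (hg : ContinuousOn g (Set.Icc a b)) :
    (∫ s in a..b, |g s|) ^ 2 ≤ (b - a) * ∫ s in a..b, g s ^ 2 := by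
  have hg' : ContinuousOn g (Set.uIcc a b) := by rwa [Set.uIcc_of_le hab.le]
  have i1 : IntervalIntegrable (fun s => |g s|) volume a b := hg'.abs.intervalIntegrable
  have i2 : IntervalIntegrable (fun s => g s ^ 2) volume a b := (hg'.pow 2).intervalIntegrable
  set J := ∫ s in a..b, |g s| with hJ
  set c := J / (b - a) with hc
  have h : 0 < b - a := sub_pos.2 hab
  have h0 : 0 ≤ ∫ s in a..b, (g s ^ 2 - 2 * c * |g s| + c ^ 2) := by
    refine intervalIntegral.integral_nonneg hab.le fun s _ => ?_
    have : g s ^ 2 - 2 * c * |g s| + c ^ 2 = (|g s| - c) ^ 2 := by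
      rw [sub_sq, sq_abs]; ring
    rw [this]; positivity
  rw [intervalIntegral.integral_add (i2.sub (i1.const_mul _)) (by simp),
    intervalIntegral.integral_sub i2 (i1.const_mul _), intervalIntegral.integral_const_mul,
    intervalIntegral.integral_const, ← hJ, smul_eq_mul] at h0
  have hcJ : J = c * (b - a) := by rw [hc]; field_simp
  have := mul_nonneg h.le h0
  nlinarith [this]

theorem ofReal_sq_le_cellAvg {g : ℝ → ℝ} (hg : ContinuousOn g (Set.Icc 0 1)) {n k : ℕ} (hk : k < n)
    {x c : ℝ} (h1 : (k : ℝ) ≤ n * x) (h2 : n * x < (k : ℝ) + 1)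
    (hc : |c| ≤ ∫ s in ((k : ℝ) / n)..(((k : ℝ) + 1) / n), |g s|) :
    ENNReal.ofReal (c ^ 2) ≤ ENNReal.ofReal ((1 / n : ℝ) ^ 2) * cellAvg n (unitSq g) x := by
  have hn : (0 : ℝ) < n := by exact_mod_cast (by omega : 0 < n)
  set a : ℝ := (k : ℝ) / n with ha
  set b : ℝ := ((k : ℝ) + 1) / n with hb
  have hba : b - a = 1 / n := by rw [ha, hb]; ring
  have hab : a < b := by have : 0 < 1 / (n : ℝ) := by positivity
                         linarith
  have ha0 : 0 ≤ a := by positivity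
  have hb1 : b ≤ 1 := by
    rw [hb, div_le_one hn]; exact_mod_cast hk
  have hg' := hg.mono (Set.Icc_subset_Icc ha0 hb1)
  have hsq : c ^ 2 ≤ 1 / n * ∫ s in a..b, g s ^ 2 := by
    rw [← hba, ← sq_abs]
    exact (pow_le_pow_left₀ (abs_nonneg c) hc 2).trans (sq_integral_abs_le hab hg')
  have hint : IntegrableOn (fun s => g s ^ 2) (Set.Ioc a b) :=
    ((hg'.pow 2).integrableOn_Icc).mono_set Set.Ioc_subset_Icc_self
  have hlow : (n : ENNReal) * ENNReal.ofReal (∫ s in a..b, g s ^ 2) ≤ cellAvg n (unitSq g) x := by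
    rw [intervalIntegral.integral_of_le hab.le,
      ofReal_integral_eq_lintegral_ofReal hint (Filter.Eventually.of_forall fun s => sq_nonneg _),
      ← restrict_Ioo_eq_restrict_Ioc, ← lintegral_const_mul' _ _ (ENNReal.natCast_ne_top n),
      ← lintegral_indicator measurableSet_Ioo]
    refine lintegral_mono fun s => ?_
    by_cases hs : s ∈ Set.Ioo a b
    · have hs1 : (k : ℝ) < n * s := by
        have := hs.1; rw [ha, div_lt_iff₀ hn] at this; linarith
      have hs2 : n * s < (k : ℝ) + 1 := by
        have := hs.2; rw [hb, lt_div_iff₀ hn] at this; linarith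
      have e1 : ⌊(n : ℝ) * x⌋ = (k : ℤ) := Int.floor_eq_iff.2 ⟨by simpa using h1, by simpa using h2⟩
      have e2 : ⌊(n : ℝ) * s⌋ = (k : ℤ) :=
        Int.floor_eq_iff.2 ⟨by simpa using hs1.le, by simpa using hs2⟩
      have hs' : s ∈ Set.Ioo (0 : ℝ) 1 := ⟨ha0.trans_lt hs.1, hs.2.trans_le hb1⟩
      simp [cellKer, unitSq, e1, e2, hs, hs']
    · simp [hs]
  calc ENNReal.ofReal (c ^ 2) ≤ ENNReal.ofReal (1 / n * ∫ s in a..b, g s ^ 2) :=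
        ENNReal.ofReal_le_ofReal hsq
    _ = ENNReal.ofReal ((1 / n : ℝ) ^ 2) * (n * ENNReal.ofReal (∫ s in a..b, g s ^ 2)) := by
        rw [← ENNReal.ofReal_natCast n, ← ENNReal.ofReal_mul hn.le,
          ← ENNReal.ofReal_mul (by positivity)]
        congr 1; field_simp
    _ ≤ _ := by gcongr

/-- The interpolation error in one variable. -/
def err (n : ℕ) (f : ℝ → ℝ) (x : ℝ) : ℝ := f x - ∑ i ∈ range (n + 1), f ((i : ℝ) / n) * hat n i x

theorem abs_sub_le_integral_abs {f f' : ℝ → ℝ} {a b : ℝ}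
    (hf : ∀ x ∈ Set.Icc a b, HasDerivAt f (f' x) x) (hf' : ContinuousOn f' (Set.Icc a b))
    {x y : ℝ} (hx : x ∈ Set.Icc a b) (hy : y ∈ Set.Icc a b) :
    |f x - f y| ≤ ∫ s in a..b, |f' s| := by
  wlog hxy : y ≤ x generalizing x y
  · rw [abs_sub_comm]; exact this hy hx (le_of_not_ge hxy)
  have hsub : Set.Icc y x ⊆ Set.Icc a b := Set.Icc_subset_Icc hy.1 hx.2
  have hab : a ≤ b := hx.1.trans hx.2
  have hu : Set.uIcc y x = Set.Icc y x := Set.uIcc_of_le hxy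
  rw [← intervalIntegral.integral_eq_sub_of_hasDerivAt
    (fun t ht => hf t (hsub (hu ▸ ht))) ((hf'.mono (hu ▸ hsub)).intervalIntegrable)]
  refine (intervalIntegral.abs_integral_le_integral_abs hxy).trans ?_
  refine intervalIntegral.integral_mono_interval hy.1 hxy hx.2
    (Filter.Eventually.of_forall fun s => abs_nonneg _) ?_
  exact ContinuousOn.intervalIntegrable (by rw [Set.uIcc_of_le hab]; exact hf'.abs)

theorem exists_cell {n : ℕ} (hn : 0 < n) {x : ℝ} (hx : x ∈ Set.Ioo (0 : ℝ) 1) :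
    ∃ k : ℕ, k < n ∧ (k : ℝ) ≤ n * x ∧ n * x < (k : ℝ) + 1 := by
  have h : (0 : ℝ) < n := by exact_mod_cast hn
  have h0 : 0 ≤ n * x := mul_nonneg h.le hx.1.le
  refine ⟨⌊(n : ℝ) * x⌋₊, ?_, Nat.floor_le h0, Nat.lt_floor_add_one _⟩
  rw [Nat.floor_lt h0]
  nlinarith [hx.2]

theorem cell_subset {n k : ℕ} (hk : k < n) :
    Set.Icc ((k : ℝ) / n) (((k : ℝ) + 1) / n) ⊆ Set.Icc 0 1 := by
  have hn : (0 : ℝ) < n := by exact_mod_cast (by omega : 0 < n)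
  refine Set.Icc_subset_Icc (by positivity) ?_
  rw [div_le_one hn]; exact_mod_cast hk

theorem err_sq_le_of_hasDerivAt {f f' : ℝ → ℝ} (hf : ∀ x ∈ Set.Icc (0 : ℝ) 1, HasDerivAt f (f' x) x)
    (hf' : ContinuousOn f' (Set.Icc 0 1)) {n : ℕ} (hn : 0 < n) {x : ℝ}
    (hx : x ∈ Set.Ioo (0 : ℝ) 1) :
    ENNReal.ofReal (err n f x ^ 2) ≤ ENNReal.ofReal ((1 / n : ℝ) ^ 2) * cellAvg n (unitSq f') x := by
  obtain ⟨k, hk, h1, h2⟩ := exists_cell hn hx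
  have h : (0 : ℝ) < n := by exact_mod_cast hn
  refine ofReal_sq_le_cellAvg hf' hk h1 h2 ?_
  have hsub := cell_subset hk
  have hf1 := fun t ht => hf t (hsub ht)
  have hab : (k : ℝ) / n ≤ ((k : ℝ) + 1) / n := by gcongr; linarith
  have hxm : x ∈ Set.Icc ((k : ℝ) / n) (((k : ℝ) + 1) / n) := by
    rw [Set.mem_Icc, div_le_iff₀ h, le_div_iff₀ h]; constructor <;> linarith
  have ka := abs_sub_le_integral_abs hf1 (hf'.mono hsub) hxm (Set.left_mem_Icc.2 hab)
  have kb := abs_sub_le_integral_abs hf1 (hf'.mono hsub) hxm (Set.right_mem_Icc.2 hab)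
  rw [err, sum_mul_hat_eq hk h1 h2.le]
  rw [abs_le] at ka kb ⊢
  constructor <;> nlinarith

theorem err_hasDerivAt_cell {f f' : ℝ → ℝ} {n k : ℕ} (hk : k < n) {x : ℝ} (h1 : (k : ℝ) < n * x)
    (h2 : n * x < (k : ℝ) + 1) (hf : HasDerivAt f (f' x) x) :
    HasDerivAt (err n f)
      (f' x - n * (f (((k : ℝ) + 1) / n) - f ((k : ℝ) / n))) x := by
  have h : (0 : ℝ) < n := by exact_mod_cast (by omega : 0 < n)
  have hlin : HasDerivAt (fun t : ℝ => f t - (f ((k : ℝ) / n) * (k + 1 - n * t)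
      + f (((k : ℝ) + 1) / n) * (n * t - k)))
      (f' x - n * (f (((k : ℝ) + 1) / n) - f ((k : ℝ) / n))) x := by
    have hm : HasDerivAt (fun t : ℝ => (n : ℝ) * t) n x := by
      simpa using (hasDerivAt_id x).const_mul (n : ℝ)
    refine (hf.sub (((hm.const_sub ((k : ℝ) + 1)).const_mul (f ((k : ℝ) / n))).add
      ((hm.sub_const (k : ℝ)).const_mul (f (((k : ℝ) + 1) / n))))).congr_deriv ?_
    ring
  refine hlin.congr_of_eventuallyEq ?_
  have hc : Continuous fun t : ℝ => (n : ℝ) * t := by fun_prop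
  filter_upwards [hc.continuousAt.eventually (lt_mem_nhds h1),
    hc.continuousAt.eventually (gt_mem_nhds h2)] with t ht1 ht2
  rw [err, sum_mul_hat_eq hk ht1.le ht2.le]

/-- On a mesh cell the derivative of the interpolation error is bounded by the `L¹` norm of the
second derivative. -/
theorem abs_err_deriv_le {f f' f'' : ℝ → ℝ} (hf : ∀ x ∈ Set.Icc (0 : ℝ) 1, HasDerivAt f (f' x) x)
    (hf' : ∀ x ∈ Set.Icc (0 : ℝ) 1, HasDerivAt f' (f'' x) x)
    (hf'' : ContinuousOn f'' (Set.Icc 0 1)) {n k : ℕ} (hk : k < n) {x : ℝ}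
    (h1 : (k : ℝ) ≤ n * x) (h2 : n * x ≤ (k : ℝ) + 1) :
    |f' x - n * (f (((k : ℝ) + 1) / n) - f ((k : ℝ) / n))| ≤
      ∫ s in ((k : ℝ) / n)..(((k : ℝ) + 1) / n), |f'' s| := by
  have h : (0 : ℝ) < n := by exact_mod_cast (by omega : 0 < n)
  have hsub := cell_subset hk
  have hab : (k : ℝ) / n < ((k : ℝ) + 1) / n := by gcongr; linarith
  obtain ⟨ξ, hξ, he⟩ := exists_hasDerivAt_eq_slope f f' hab
    (fun t ht => (hf t (hsub ht)).continuousAt.continuousWithinAt)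
    (fun t ht => hf t (hsub (Set.Ioo_subset_Icc_self ht)))
  have hd : ((k : ℝ) + 1) / n - (k : ℝ) / n = 1 / n := by ring
  have he' : n * (f (((k : ℝ) + 1) / n) - f ((k : ℝ) / n)) = f' ξ := by
    rw [he, hd]; field_simp
  rw [he']
  refine abs_sub_le_integral_abs (fun t ht => hf' t (hsub ht)) (hf''.mono hsub) ?_
    (Set.Ioo_subset_Icc_self hξ)
  rw [Set.mem_Icc, div_le_iff₀ h, le_div_iff₀ h]; constructor <;> linarith

theorem err_deriv_sq_le {f f' f'' : ℝ → ℝ} (hf : ∀ x ∈ Set.Icc (0 : ℝ) 1, HasDerivAt f (f' x) x)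
    (hf' : ∀ x ∈ Set.Icc (0 : ℝ) 1, HasDerivAt f' (f'' x) x)
    (hf'' : ContinuousOn f'' (Set.Icc 0 1)) {n : ℕ} (hn : 0 < n) {x : ℝ}
    (hx : x ∈ Set.Ioo (0 : ℝ) 1) (hmesh : ∀ k : ℕ, n * x ≠ k) :
    ∃ d, HasDerivAt (err n f) d x ∧
      ENNReal.ofReal (d ^ 2) ≤
        ENNReal.ofReal ((1 / n : ℝ) ^ 2) * cellAvg n (unitSq f'') x := by
  obtain ⟨k, hk, h1, h2⟩ := exists_cell hn hx
  refine ⟨_, err_hasDerivAt_cell (f' := f') hk (lt_of_le_of_ne h1 (hmesh k).symm) h2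
    (hf x (Set.Ioo_subset_Icc_self hx)), ?_⟩
  exact ofReal_sq_le_cellAvg hf'' hk h1 h2 (abs_err_deriv_le hf hf' hf'' hk h1 h2.le)

theorem err_sq_le {f f' f'' : ℝ → ℝ} (hf : ∀ x ∈ Set.Icc (0 : ℝ) 1, HasDerivAt f (f' x) x)
    (hf' : ∀ x ∈ Set.Icc (0 : ℝ) 1, HasDerivAt f' (f'' x) x)
    (hf'' : ContinuousOn f'' (Set.Icc 0 1)) {n : ℕ} (hn : 0 < n) {x : ℝ}
    (hx : x ∈ Set.Ioo (0 : ℝ) 1) :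
    ENNReal.ofReal (err n f x ^ 2) ≤
      ENNReal.ofReal ((1 / n : ℝ) ^ 4) * cellAvg n (unitSq f'') x := by
  obtain ⟨k, hk, h1, h2⟩ := exists_cell hn hx
  have h : (0 : ℝ) < n := by exact_mod_cast hn
  have hsub := cell_subset hk
  set a : ℝ := (k : ℝ) / n with ha
  set b : ℝ := ((k : ℝ) + 1) / n with hb
  have hax : a ≤ x := by rw [ha, div_le_iff₀ h]; linarith
  have hxb : x < b := by rw [hb, lt_div_iff₀ h]; linarith
  set J := ∫ s in a..b, |f'' s| with hJ
  have hbound : |err n f x| ≤ J * (1 / n) := by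
    set g : ℝ → ℝ := fun t => f t - (f a * (k + 1 - n * t) + f b * (n * t - k)) with hg
    have hga : g a = 0 := by
      have : (n : ℝ) * a = k := by rw [ha]; field_simp
      simp only [hg, this]; ring
    have hgd : ∀ t ∈ Set.Icc a b, HasDerivWithinAt g (f' t - n * (f b - f a)) (Set.Icc a b) t := by
      intro t ht
      have hm : HasDerivAt (fun t : ℝ => (n : ℝ) * t) n t := by
        simpa using (hasDerivAt_id t).const_mul (n : ℝ)
      refine (((hf t (hsub ht)).sub (((hm.const_sub ((k : ℝ) + 1)).const_mul (f a)).add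
        ((hm.sub_const (k : ℝ)).const_mul (f b)))).congr_deriv ?_).hasDerivWithinAt
      ring
    have := (convex_Icc a b).norm_image_sub_le_of_norm_hasDerivWithin_le (C := J) hgd
      (fun t ht => by
        refine abs_err_deriv_le hf hf' hf'' hk ?_ ?_
        · have := ht.1; rw [ha, div_le_iff₀ h] at this; linarith
        · have := ht.2; rw [hb, le_div_iff₀ h] at this; linarith)
      (Set.left_mem_Icc.2 (hax.trans hxb.le)) ⟨hax, hxb.le⟩
    rw [hga, sub_zero, Real.norm_eq_abs, Real.norm_eq_abs, abs_of_nonneg (sub_nonneg.2 hax)] at this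
    have hJ0 : 0 ≤ J := intervalIntegral.integral_nonneg (hax.trans hxb.le) fun s _ => abs_nonneg _
    have hxa : x - a ≤ 1 / n := by
      have : b - a = 1 / n := by rw [ha, hb]; ring
      linarith
    rw [err, sum_mul_hat_eq hk h1 h2.le]
    exact this.trans (mul_le_mul_of_nonneg_left hxa hJ0)
  have key := ofReal_sq_le_cellAvg hf'' hk h1 h2 (c := n * err n f x) (by
    rw [abs_mul, abs_of_pos h]
    calc (n : ℝ) * |err n f x| ≤ n * (J * (1 / n)) := by gcongr
      _ = J := by field_simp)
  calc ENNReal.ofReal (err n f x ^ 2)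
      = ENNReal.ofReal ((1 / n : ℝ) ^ 2) * ENNReal.ofReal ((n * err n f x) ^ 2) := by
        rw [← ENNReal.ofReal_mul (by positivity)]
        congr 1; field_simp
    _ ≤ ENNReal.ofReal ((1 / n : ℝ) ^ 2) *
        (ENNReal.ofReal ((1 / n : ℝ) ^ 2) * cellAvg n (unitSq f'') x) := by gcongr
    _ = _ := by
        rw [← mul_assoc, ← ENNReal.ofReal_mul (by positivity)]
        congr 2; ring

/-! ### Interpolation errors and cell averages in the plane -/

/-- The interpolation error in the `x`-direction. -/
def errX (n : ℕ) (u : ℝ × ℝ → ℝ) : ℝ × ℝ → ℝ := fun p => err n (fun x => u (x, p.2)) p.1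

/-- The interpolation error in the `y`-direction. -/
def errY (n : ℕ) (u : ℝ × ℝ → ℝ) : ℝ × ℝ → ℝ := fun p => err n (fun y => u (p.1, y)) p.2

/-- The average over mesh cells in the `x`-direction. -/
def avgX (n : ℕ) (W : ℝ × ℝ → ENNReal) : ℝ × ℝ → ENNReal :=
  fun p => cellAvg n (fun x => W (x, p.2)) p.1

/-- The average over mesh cells in the `y`-direction. -/
def avgY (n : ℕ) (W : ℝ × ℝ → ENNReal) : ℝ × ℝ → ENNReal :=
  fun p => cellAvg n (fun y => W (p.1, y)) p.2

/-- The square of `g` on `Ω`, extended by zero. -/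
def omegaSq (g : ℝ × ℝ → ℝ) : ℝ × ℝ → ENNReal :=
  Omega2.indicator fun p => ENNReal.ofReal (g p ^ 2)

/-- `dv` is the partial derivative of `v` in `x` on the closed square. -/
def HasPX (v dv : ℝ × ℝ → ℝ) : Prop :=
  ∀ x ∈ Set.Icc (0 : ℝ) 1, ∀ y ∈ Set.Icc (0 : ℝ) 1, HasDerivAt (fun t => v (t, y)) (dv (x, y)) x

/-- `dv` is the partial derivative of `v` in `y` on the closed square. -/
def HasPY (v dv : ℝ × ℝ → ℝ) : Prop :=
  ∀ x ∈ Set.Icc (0 : ℝ) 1, ∀ y ∈ Set.Icc (0 : ℝ) 1, HasDerivAt (fun t => v (x, t)) (dv (x, y)) y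

theorem errX_errY (n m : ℕ) (u : ℝ × ℝ → ℝ) (p : ℝ × ℝ) :
    errX n (errY m u) p = u p - interpY m u p - interpX n u p + interp n m u p := by
  simp only [errX, errY, err, interpX, interpY, interp, sub_mul, Finset.sum_sub_distrib,
    Finset.sum_mul]
  have : ∀ i j : ℕ, u ((i : ℝ) / n, (j : ℝ) / m) * hat m j p.2 * hat n i p.1 =
    u ((i : ℝ) / n, (j : ℝ) / m) * hat n i p.1 * hat m j p.2 := fun i j => by ring
  simp only [this]
  ring

theorem errY_errX (n m : ℕ) (u : ℝ × ℝ → ℝ) (p : ℝ × ℝ) :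
    errY m (errX n u) p = errX n (errY m u) p := by
  rw [errX_errY]
  simp only [errX, errY, err, interpX, interpY, interp, sub_mul, Finset.sum_sub_distrib,
    Finset.sum_mul]
  rw [Finset.sum_comm]
  ring

theorem sub_twoScale_eq (N σ : ℕ) (u : ℝ × ℝ → ℝ) (p : ℝ × ℝ) :
    u p - twoScale N σ u p = errX N u p + errY N u p - errX N (errY σ u) p
      - errX σ (errY N u) p + errX σ (errY σ u) p := by
  have e1 : errX N u p = u p - interpX N u p := rfl
  have e2 : errY N u p = u p - interpY N u p := rfl
  rw [errX_errY, errX_errY, errX_errY, e1, e2, twoScale]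
  ring

theorem measurable_avgX (n : ℕ) {W : ℝ × ℝ → ENNReal} (hW : Measurable W) :
    Measurable (avgX n W) := by
  have : Measurable fun q : (ℝ × ℝ) × ℝ => cellKer n q.1.1 q.2 * W (q.2, q.1.2) :=
    ((measurable_cellKer n).comp (by fun_prop : Measurable fun q : (ℝ × ℝ) × ℝ => (q.1.1, q.2))).mul
      (hW.comp (by fun_prop))
  exact this.lintegral_prod_right'

theorem lintegral_cellAvg {n : ℕ} (hn : 0 < n) {w : ℝ → ENNReal} (hw : Measurable w) :
    ∫⁻ x, cellAvg n w x = ∫⁻ x, w x := by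
  unfold cellAvg
  rw [lintegral_lintegral_swap]
  · refine lintegral_congr fun s => ?_
    have hk : Measurable fun x => cellKer n x s :=
      (measurable_cellKer n).comp (by fun_prop : Measurable fun x : ℝ => (x, s))
    rw [lintegral_mul_const _ hk, lintegral_cellKer hn, one_mul]
  · exact ((measurable_cellKer n).mul (hw.comp measurable_snd)).aemeasurable

theorem lintegral_avgX {n : ℕ} (hn : 0 < n) {W : ℝ × ℝ → ENNReal} (hW : Measurable W) :
    ∫⁻ p, avgX n W p = ∫⁻ p, W p := by
  rw [Measure.volume_eq_prod, lintegral_prod_symm' _ (measurable_avgX n hW),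
    lintegral_prod_symm' _ hW]
  exact lintegral_congr fun y => lintegral_cellAvg hn (hW.comp measurable_prodMk_right)

theorem measurable_avgY (n : ℕ) {W : ℝ × ℝ → ENNReal} (hW : Measurable W) :
    Measurable (avgY n W) :=
  (measurable_avgX n (hW.comp measurable_swap)).comp measurable_swap

theorem lintegral_avgY {n : ℕ} (hn : 0 < n) {W : ℝ × ℝ → ENNReal} (hW : Measurable W) :
    ∫⁻ p, avgY n W p = ∫⁻ p, W p := by
  rw [Measure.volume_eq_prod, lintegral_prod _ (measurable_avgY n hW).aemeasurable,
    lintegral_prod _ hW.aemeasurable]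
  exact lintegral_congr fun x => lintegral_cellAvg hn (hW.comp measurable_prodMk_left)

theorem omegaSq_swap (g : ℝ × ℝ → ℝ) : omegaSq (g ∘ Prod.swap) = omegaSq g ∘ Prod.swap := by
  ext p
  have : p ∈ Omega2 ↔ p.swap ∈ Omega2 := by simp [Omega2, and_comm]
  by_cases hp : p ∈ Omega2
  · simp [omegaSq, hp, this.1 hp]
  · simp [omegaSq, hp, this.not.1 hp]

theorem omegaSq_left (g : ℝ × ℝ → ℝ) {y : ℝ} (hy : y ∈ Set.Ioo (0 : ℝ) 1) :
    (fun x => omegaSq g (x, y)) = unitSq fun x => g (x, y) := by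
  ext x
  have : (x, y) ∈ Omega2 ↔ x ∈ Set.Ioo (0 : ℝ) 1 := by
    exact and_iff_left hy
  simp only [omegaSq, unitSq, Set.indicator, this]

theorem omegaSq_right (g : ℝ × ℝ → ℝ) {x : ℝ} (hx : x ∈ Set.Ioo (0 : ℝ) 1) :
    (fun y => omegaSq g (x, y)) = unitSq fun y => g (x, y) := by
  ext y
  have : (x, y) ∈ Omega2 ↔ y ∈ Set.Ioo (0 : ℝ) 1 := by
    exact and_iff_right hx
  simp only [omegaSq, unitSq, Set.indicator, this]

theorem continuousOn_left {g : ℝ × ℝ → ℝ} (hg : ContinuousOn g unitSquare) {y : ℝ}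
    (hy : y ∈ Set.Icc (0 : ℝ) 1) : ContinuousOn (fun x => g (x, y)) (Set.Icc 0 1) :=
  hg.comp (by fun_prop) fun _ hx => ⟨hx, hy⟩

theorem continuousOn_right {g : ℝ × ℝ → ℝ} (hg : ContinuousOn g unitSquare) {x : ℝ}
    (hx : x ∈ Set.Icc (0 : ℝ) 1) : ContinuousOn (fun y => g (x, y)) (Set.Icc 0 1) :=
  hg.comp (by fun_prop) fun _ hy => ⟨hx, hy⟩

theorem node_mem {m j : ℕ} (hj : j ∈ range (m + 1)) : (j : ℝ) / m ∈ Set.Icc (0 : ℝ) 1 := by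
  refine ⟨by positivity, div_le_one_of_le₀ ?_ (by positivity)⟩
  exact_mod_cast Nat.lt_succ_iff.1 (Finset.mem_range.1 hj)

theorem HasPX.errY {v v' : ℝ × ℝ → ℝ} (h : HasPX v v') (m : ℕ) : HasPX (errY m v) (errY m v') := by
  intro x hx y hy
  refine (h x hx y hy).sub (HasDerivAt.fun_sum fun j hj => ?_)
  exact (h x hx _ (node_mem hj)).mul_const (hat m j y)

theorem continuousOn_errY {g : ℝ × ℝ → ℝ} (hg : ContinuousOn g unitSquare) (m : ℕ) {y : ℝ}
    (hy : y ∈ Set.Icc (0 : ℝ) 1) : ContinuousOn (fun x => errY m g (x, y)) (Set.Icc 0 1) := by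
  refine (continuousOn_left hg hy).sub (continuousOn_finsetSum _ fun j hj => ?_)
  exact (continuousOn_left hg (node_mem hj)).mul (continuousOn_const (c := hat m j y))

theorem swap_mem_Omega2 {p : ℝ × ℝ} (hp : p ∈ Omega2) : p.swap ∈ Omega2 := ⟨hp.2, hp.1⟩

theorem ContinuousOn.comp_swap_unitSquare {g : ℝ × ℝ → ℝ} (hg : ContinuousOn g unitSquare) :
    ContinuousOn (g ∘ Prod.swap) unitSquare :=
  hg.comp continuous_swap.continuousOn fun _ hp => ⟨hp.2, hp.1⟩

theorem HasPY.comp_swap {v v' : ℝ × ℝ → ℝ} (h : HasPY v v') :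
    HasPX (v ∘ Prod.swap) (v' ∘ Prod.swap) := fun x hx y hy => h y hy x hx

theorem HasPX.comp_swap {v v' : ℝ × ℝ → ℝ} (h : HasPX v v') :
    HasPY (v ∘ Prod.swap) (v' ∘ Prod.swap) := fun x hx y hy => h y hy x hx

theorem errX_deriv_sq_le {u u₁ u₂ : ℝ × ℝ → ℝ} (h₁ : HasPX u u₁) (h₂ : HasPX u₁ u₂)
    (hc : ContinuousOn u₂ unitSquare) {n : ℕ} (hn : 0 < n) {p : ℝ × ℝ} (hp : p ∈ Omega2)
    (hmesh : ∀ k : ℕ, n * p.1 ≠ k) :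
    ∃ d, HasDerivAt (fun t => errX n u (t, p.2)) d p.1 ∧
      ENNReal.ofReal (d ^ 2) ≤ ENNReal.ofReal ((1 / n : ℝ) ^ 2) * avgX n (omegaSq u₂) p := by
  have hy := Set.Ioo_subset_Icc_self hp.2
  rw [avgX, omegaSq_left _ hp.2]
  exact err_deriv_sq_le (fun x hx => h₁ x hx _ hy) (fun x hx => h₂ x hx _ hy)
    (continuousOn_left hc hy) hn hp.1 hmesh

theorem errX_sq_le {u u₁ u₂ : ℝ × ℝ → ℝ} (h₁ : HasPX u u₁) (h₂ : HasPX u₁ u₂)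
    (hc : ContinuousOn u₂ unitSquare) {n : ℕ} (hn : 0 < n) {p : ℝ × ℝ} (hp : p ∈ Omega2) :
    ENNReal.ofReal (errX n u p ^ 2) ≤
      ENNReal.ofReal ((1 / n : ℝ) ^ 4) * avgX n (omegaSq u₂) p := by
  have hy := Set.Ioo_subset_Icc_self hp.2
  rw [avgX, omegaSq_left _ hp.2]
  exact err_sq_le (fun x hx => h₁ x hx _ hy) (fun x hx => h₂ x hx _ hy)
    (continuousOn_left hc hy) hn hp.1

theorem errY_sq_le {u u₁ u₂ : ℝ × ℝ → ℝ} (h₁ : HasPY u u₁) (h₂ : HasPY u₁ u₂)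
    (hc : ContinuousOn u₂ unitSquare) {n : ℕ} (hn : 0 < n) {p : ℝ × ℝ} (hp : p ∈ Omega2) :
    ENNReal.ofReal (errY n u p ^ 2) ≤
      ENNReal.ofReal ((1 / n : ℝ) ^ 4) * avgY n (omegaSq u₂) p := by
  have := errX_sq_le h₁.comp_swap h₂.comp_swap hc.comp_swap_unitSquare hn (swap_mem_Omega2 hp)
  rwa [omegaSq_swap] at this

theorem errY_sq_le_of_hasPY {u u₁ : ℝ × ℝ → ℝ} (h₁ : HasPY u u₁)
    (hc : ContinuousOn u₁ unitSquare) {n : ℕ} (hn : 0 < n) {p : ℝ × ℝ} (hp : p ∈ Omega2) :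
    ENNReal.ofReal (errY n u p ^ 2) ≤
      ENNReal.ofReal ((1 / n : ℝ) ^ 2) * avgY n (omegaSq u₁) p := by
  have hx := Set.Ioo_subset_Icc_self hp.1
  rw [avgY, omegaSq_right _ hp.1]
  exact err_sq_le_of_hasDerivAt (fun y hy => h₁ _ hx y hy) (continuousOn_right hc hx) hn hp.2

theorem cellAvg_errY_le {w w₁ w₂ : ℝ × ℝ → ℝ} (h₁ : HasPY w w₁) (h₂ : HasPY w₁ w₂)
    (hc : ContinuousOn w₂ unitSquare) (n : ℕ) {m : ℕ} (hm : 0 < m) {p : ℝ × ℝ} (hp : p ∈ Omega2) :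
    cellAvg n (unitSq fun x => errY m w (x, p.2)) p.1 ≤
      ENNReal.ofReal ((1 / m : ℝ) ^ 4) * avgX n (avgY m (omegaSq w₂)) p := by
  rw [avgX, ← cellAvg_const_mul n ENNReal.ofReal_ne_top]
  refine cellAvg_mono n (fun s => ?_) _
  by_cases hs : s ∈ Set.Ioo (0 : ℝ) 1
  · rw [unitSq, Set.indicator_of_mem hs]
    exact errY_sq_le h₁ h₂ hc hm (p := (s, p.2)) ⟨hs, hp.2⟩
  · rw [unitSq, Set.indicator_of_notMem hs]
    exact zero_le

theorem errX_errY_deriv_sq_le {u u₁ u₂ u₃ u₄ : ℝ × ℝ → ℝ} (h₁ : HasPX u u₁) (h₂ : HasPX u₁ u₂)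
    (h₃ : HasPY u₂ u₃) (h₄ : HasPY u₃ u₄) (hc : ContinuousOn u₂ unitSquare)
    (hc' : ContinuousOn u₄ unitSquare) {n m : ℕ} (hn : 0 < n) (hm : 0 < m) {p : ℝ × ℝ}
    (hp : p ∈ Omega2) (hmesh : ∀ k : ℕ, n * p.1 ≠ k) :
    ∃ d, HasDerivAt (fun t => errX n (errY m u) (t, p.2)) d p.1 ∧
      ENNReal.ofReal (d ^ 2) ≤ ENNReal.ofReal ((1 / n : ℝ) ^ 2 * (1 / m : ℝ) ^ 4) *
        avgX n (avgY m (omegaSq u₄)) p := by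
  have hy := Set.Ioo_subset_Icc_self hp.2
  obtain ⟨d, hd, hle⟩ := err_deriv_sq_le (fun x hx => h₁.errY m x hx _ hy)
    (fun x hx => h₂.errY m x hx _ hy) (continuousOn_errY hc m hy) hn hp.1 hmesh
  refine ⟨d, hd, hle.trans ?_⟩
  rw [ENNReal.ofReal_mul (by positivity), mul_assoc]
  gcongr
  exact cellAvg_errY_le h₃ h₄ hc' n hm hp

theorem errX_errY_sq_le {u u₁ u₂ u₃ u₄ : ℝ × ℝ → ℝ} (h₁ : HasPX u u₁) (h₂ : HasPX u₁ u₂)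
    (h₃ : HasPY u₂ u₃) (h₄ : HasPY u₃ u₄) (hc : ContinuousOn u₂ unitSquare)
    (hc' : ContinuousOn u₄ unitSquare) {n m : ℕ} (hn : 0 < n) (hm : 0 < m) {p : ℝ × ℝ}
    (hp : p ∈ Omega2) :
    ENNReal.ofReal (errX n (errY m u) p ^ 2) ≤
      ENNReal.ofReal ((1 / n : ℝ) ^ 4 * (1 / m : ℝ) ^ 4) * avgX n (avgY m (omegaSq u₄)) p := by
  have hy := Set.Ioo_subset_Icc_self hp.2
  refine (err_sq_le (fun x hx => h₁.errY m x hx _ hy)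
    (fun x hx => h₂.errY m x hx _ hy) (continuousOn_errY hc m hy) hn hp.1).trans ?_
  rw [ENNReal.ofReal_mul (by positivity), mul_assoc]
  gcongr
  exact cellAvg_errY_le h₃ h₄ hc' n hm hp

/-! ### Bounds for the two-scale error -/

theorem ofReal_combination_sq_le {K : ENNReal} {a b c d e : ℝ} (ha : ENNReal.ofReal (a ^ 2) ≤ K)
    (hb : ENNReal.ofReal (b ^ 2) ≤ K) (hc : ENNReal.ofReal (c ^ 2) ≤ K)
    (hd : ENNReal.ofReal (d ^ 2) ≤ K) (he : ENNReal.ofReal (e ^ 2) ≤ K) :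
    ENNReal.ofReal ((a + b - c - d + e) ^ 2) ≤ 25 * K := by
  by_cases hK : K = ⊤
  · simp [hK]
  rw [ENNReal.ofReal_le_iff_le_toReal hK] at ha hb hc hd he
  rw [ENNReal.ofReal_le_iff_le_toReal (ENNReal.mul_ne_top (by simp) hK), ENNReal.toReal_mul]
  simp only [ENNReal.toReal_ofNat]
  nlinarith [sq_nonneg (a - b), sq_nonneg (a + c), sq_nonneg (a + d), sq_nonneg (a - e),
    sq_nonneg (b + c), sq_nonneg (b + d), sq_nonneg (b - e), sq_nonneg (c - d),
    sq_nonneg (c + e), sq_nonneg (d + e)]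

/-- A pointwise majorant of the squared derivatives of the two-scale error. -/
def majorant (N σ : ℕ) (uxx uxy uyy u4 : ℝ × ℝ → ℝ) (p : ℝ × ℝ) : ENNReal :=
  avgX N (omegaSq uxx) p + avgY N (omegaSq uxy) p + avgX N (omegaSq uxy) p
    + avgY N (omegaSq uyy) p
    + avgX N (avgY σ (omegaSq u4)) p + avgX σ (avgY N (omegaSq u4)) p
    + avgX σ (avgY σ (omegaSq u4)) p + avgY N (avgX σ (omegaSq u4)) p
    + avgY σ (avgX N (omegaSq u4)) p + avgY σ (avgX σ (omegaSq u4)) p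

theorem majorant_swap (N σ : ℕ) (uxx uxy uyy u4 : ℝ × ℝ → ℝ) (p : ℝ × ℝ) :
    majorant N σ (uyy ∘ Prod.swap) (uxy ∘ Prod.swap) (uxx ∘ Prod.swap) (u4 ∘ Prod.swap) p.swap =
      majorant N σ uxx uxy uyy u4 p := by
  have hX : ∀ (n : ℕ) (W : ℝ × ℝ → ENNReal), avgX n (W ∘ Prod.swap) = avgY n W ∘ Prod.swap :=
    fun _ _ => rfl
  have hY : ∀ (n : ℕ) (W : ℝ × ℝ → ENNReal), avgY n (W ∘ Prod.swap) = avgX n W ∘ Prod.swap :=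
    fun _ _ => rfl
  simp only [majorant, omegaSq_swap, hX, hY, Function.comp, Prod.swap_swap]
  ring

theorem lintegral_majorant {N σ : ℕ} (hN : 0 < N) (hσ : 0 < σ) {uxx uxy uyy u4 : ℝ × ℝ → ℝ}
    (hxx : Measurable (omegaSq uxx)) (hxy : Measurable (omegaSq uxy))
    (hyy : Measurable (omegaSq uyy)) (h4 : Measurable (omegaSq u4)) :
    ∫⁻ p, majorant N σ uxx uxy uyy u4 p = (∫⁻ p, omegaSq uxx p) + 2 * (∫⁻ p, omegaSq uxy p)
      + (∫⁻ p, omegaSq uyy p) + 6 * (∫⁻ p, omegaSq u4 p) := by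
  have X := fun (n : ℕ) {W : ℝ × ℝ → ENNReal} (hW : Measurable W) => measurable_avgX n hW
  have Y := fun (n : ℕ) {W : ℝ × ℝ → ENNReal} (hW : Measurable W) => measurable_avgY n hW
  unfold majorant
  rw [lintegral_add_right _ (Y _ (X _ h4)), lintegral_add_right _ (Y _ (X _ h4)),
    lintegral_add_right _ (Y _ (X _ h4)),
    lintegral_add_right _ (X _ (Y _ h4)), lintegral_add_right _ (X _ (Y _ h4)),
    lintegral_add_right _ (X _ (Y _ h4)),
    lintegral_add_right _ (Y _ hyy), lintegral_add_right _ (X _ hxy),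
    lintegral_add_right _ (Y _ hxy)]
  simp only [lintegral_avgX hN, lintegral_avgY hN, lintegral_avgX hσ, lintegral_avgY hσ,
    X _ h4, Y _ h4, hxx, hxy, hyy, h4]
  ring

theorem ofReal_mul_le_of_le {a b : ℝ} {v w : ENNReal} (hab : a ≤ b) (hvw : v ≤ w) :
    ENNReal.ofReal a * v ≤ ENNReal.ofReal b * w :=
  mul_le_mul' (ENNReal.ofReal_le_ofReal hab) hvw

/-- The partial derivative in `x` of the two-scale error. -/
theorem twoScale_pderivX_sq_le {u ux uxx uxy uyxx u4 : ℝ × ℝ → ℝ} (uyy : ℝ × ℝ → ℝ)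
    (h₁ : HasPX u ux) (h₂ : HasPX ux uxx) (h₃ : HasPY uxx uyxx) (h₄ : HasPY uyxx u4)
    (h₅ : HasPY ux uxy) (hxx : ContinuousOn uxx unitSquare) (hxy : ContinuousOn uxy unitSquare)
    (h4 : ContinuousOn u4 unitSquare) {M : ℕ} (hM : 0 < M) {p : ℝ × ℝ} (hp : p ∈ Omega2)
    (hmesh : ∀ k : ℕ, (M ^ 3 : ℕ) * p.1 ≠ k) (hmesh' : ∀ k : ℕ, M * p.1 ≠ k) :
    ENNReal.ofReal (pderivX (fun q => u q - twoScale (M ^ 3) M u q) p ^ 2) ≤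
      25 * (ENNReal.ofReal ((((M : ℝ) ^ 3)⁻¹) ^ 2) * majorant (M ^ 3) M uxx uxy uyy u4 p) := by
  have hN : 0 < M ^ 3 := by positivity
  have hM1 : (1 / M : ℝ) ≤ 1 := by
    rw [div_le_one (by exact_mod_cast hM)]; exact_mod_cast hM
  have hM0 : (0 : ℝ) ≤ 1 / M := by positivity
  have hcast : (1 / ((M ^ 3 : ℕ) : ℝ)) = (1 / M : ℝ) ^ 3 := by push_cast; field_simp
  have hinv : ((M : ℝ) ^ 3)⁻¹ = (1 / M : ℝ) ^ 3 := by field_simp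
  obtain ⟨d₁, hd₁, e₁⟩ := errX_deriv_sq_le h₁ h₂ hxx hN hp hmesh
  have hd₂ := h₁.errY (M ^ 3) p.1 (Set.Ioo_subset_Icc_self hp.1) p.2 (Set.Ioo_subset_Icc_self hp.2)
  have e₂ := errY_sq_le_of_hasPY h₅ hxy hN hp
  obtain ⟨d₃, hd₃, e₃⟩ := errX_errY_deriv_sq_le h₁ h₂ h₃ h₄ hxx h4 hN hM hp hmesh
  obtain ⟨d₄, hd₄, e₄⟩ := errX_errY_deriv_sq_le h₁ h₂ h₃ h₄ hxx h4 hM hN hp hmesh'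
  obtain ⟨d₅, hd₅, e₅⟩ := errX_errY_deriv_sq_le h₁ h₂ h₃ h₄ hxx h4 hM hM hp hmesh'
  have hd : pderivX (fun q => u q - twoScale (M ^ 3) M u q) p
      = d₁ + errY (M ^ 3) ux p - d₃ - d₄ + d₅ := by
    simp only [pderivX, sub_twoScale_eq]
    exact ((((hd₁.add hd₂).sub hd₃).sub hd₄).add hd₅).deriv
  rw [hd, hinv]
  rw [hcast] at e₁ e₂ e₃ e₄
  generalize (1 / M : ℝ) = t at *
  have hle : ∀ k, t ^ (6 + k) ≤ t ^ 6 := fun k => pow_le_pow_of_le_one hM0 hM1 (by omega)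
  refine ofReal_combination_sq_le (e₁.trans ?_) (e₂.trans ?_) (e₃.trans ?_) (e₄.trans ?_)
    (e₅.trans ?_) <;> refine ofReal_mul_le_of_le ?_ ?_
  · exact le_rfl
  · unfold majorant
    repeat first | exact le_rfl | exact le_add_self | refine le_add_right ?_
  · exact le_rfl
  · unfold majorant
    repeat first | exact le_rfl | exact le_add_self | refine le_add_right ?_
  · exact (le_of_eq (by ring)).trans ((hle 4).trans (le_of_eq (by ring)))
  · unfold majorant
    repeat first | exact le_rfl | exact le_add_self | refine le_add_right ?_
  · exact (le_of_eq (by ring)).trans ((hle 8).trans (le_of_eq (by ring)))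
  · unfold majorant
    repeat first | exact le_rfl | exact le_add_self | refine le_add_right ?_
  · exact le_of_eq (by ring)
  · unfold majorant
    repeat first | exact le_rfl | exact le_add_self | refine le_add_right ?_

/-- The partial derivative in `y` of the two-scale error. -/
theorem twoScale_pderivY_sq_le {u uy uyy uxy uxyy u4 : ℝ × ℝ → ℝ} (uxx : ℝ × ℝ → ℝ)
    (h₁ : HasPY u uy) (h₂ : HasPY uy uyy) (h₃ : HasPX uyy uxyy) (h₄ : HasPX uxyy u4)
    (h₅ : HasPX uy uxy) (hyy : ContinuousOn uyy unitSquare) (hxy : ContinuousOn uxy unitSquare)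
    (h4 : ContinuousOn u4 unitSquare) {M : ℕ} (hM : 0 < M) {p : ℝ × ℝ} (hp : p ∈ Omega2)
    (hmesh : ∀ k : ℕ, (M ^ 3 : ℕ) * p.2 ≠ k) (hmesh' : ∀ k : ℕ, M * p.2 ≠ k) :
    ENNReal.ofReal (pderivY (fun q => u q - twoScale (M ^ 3) M u q) p ^ 2) ≤
      25 * (ENNReal.ofReal ((((M : ℝ) ^ 3)⁻¹) ^ 2) * majorant (M ^ 3) M uxx uxy uyy u4 p) := by
  have key := twoScale_pderivX_sq_le (uxx ∘ Prod.swap) h₁.comp_swap h₂.comp_swap h₃.comp_swap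
    h₄.comp_swap h₅.comp_swap hyy.comp_swap_unitSquare hxy.comp_swap_unitSquare
    h4.comp_swap_unitSquare hM (swap_mem_Omega2 hp) hmesh hmesh'
  rw [majorant_swap] at key
  have hfun : ∀ q, (u ∘ Prod.swap) q - twoScale (M ^ 3) M (u ∘ Prod.swap) q
      = u q.swap - twoScale (M ^ 3) M u q.swap := by
    intro q
    have hXY : ∀ n m : ℕ, errX n (errY m (u ∘ Prod.swap)) q = errX m (errY n u) q.swap :=
      fun n m => errY_errX m n u q.swap
    have hX : errX (M ^ 3) (u ∘ Prod.swap) q = errY (M ^ 3) u q.swap := rfl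
    have hY : errY (M ^ 3) (u ∘ Prod.swap) q = errX (M ^ 3) u q.swap := rfl
    rw [sub_twoScale_eq, sub_twoScale_eq, hXY, hXY, hXY, hX, hY]
    ring
  simp only [hfun] at key
  exact key

theorem twoScale_sq_le {u ux uy uxx uyy uyxx u4 : ℝ × ℝ → ℝ} (uxy : ℝ × ℝ → ℝ)
    (h₁ : HasPX u ux) (h₂ : HasPX ux uxx) (h₃ : HasPY uxx uyxx) (h₄ : HasPY uyxx u4)
    (h₅ : HasPY u uy) (h₆ : HasPY uy uyy)
    (hxx : ContinuousOn uxx unitSquare) (hyy : ContinuousOn uyy unitSquare)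
    (h4 : ContinuousOn u4 unitSquare) {M : ℕ} (hM : 0 < M) {p : ℝ × ℝ} (hp : p ∈ Omega2) :
    ENNReal.ofReal ((u p - twoScale (M ^ 3) M u p) ^ 2) ≤
      25 * (ENNReal.ofReal ((((M : ℝ) ^ 3)⁻¹) ^ 2) * majorant (M ^ 3) M uxx uxy uyy u4 p) := by
  have hN : 0 < M ^ 3 := by positivity
  have hM1 : (1 / M : ℝ) ≤ 1 := by
    rw [div_le_one (by exact_mod_cast hM)]; exact_mod_cast hM
  have hM0 : (0 : ℝ) ≤ 1 / M := by positivity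
  have hcast : (1 / ((M ^ 3 : ℕ) : ℝ)) = (1 / M : ℝ) ^ 3 := by push_cast; field_simp
  have hinv : ((M : ℝ) ^ 3)⁻¹ = (1 / M : ℝ) ^ 3 := by field_simp
  have e₁ := errX_sq_le h₁ h₂ hxx hN hp
  have e₂ := errY_sq_le h₅ h₆ hyy hN hp
  have e₃ := errX_errY_sq_le h₁ h₂ h₃ h₄ hxx h4 hN hM hp
  have e₄ := errX_errY_sq_le h₁ h₂ h₃ h₄ hxx h4 hM hN hp
  have e₅ := errX_errY_sq_le h₁ h₂ h₃ h₄ hxx h4 hM hM hp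
  rw [sub_twoScale_eq, hinv]
  rw [hcast] at e₁ e₂ e₃ e₄
  generalize (1 / M : ℝ) = t at *
  have hle : ∀ k, t ^ (6 + k) ≤ t ^ 6 := fun k => pow_le_pow_of_le_one hM0 hM1 (by omega)
  refine ofReal_combination_sq_le (e₁.trans ?_) (e₂.trans ?_) (e₃.trans ?_) (e₄.trans ?_)
    (e₅.trans ?_) <;> refine ofReal_mul_le_of_le ?_ ?_
  · exact (le_of_eq (by ring)).trans ((hle 6).trans (le_of_eq (by ring)))
  · unfold majorant
    repeat first | exact le_rfl | exact le_add_self | refine le_add_right ?_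
  · exact (le_of_eq (by ring)).trans ((hle 6).trans (le_of_eq (by ring)))
  · unfold majorant
    repeat first | exact le_rfl | exact le_add_self | refine le_add_right ?_
  · exact (le_of_eq (by ring)).trans ((hle 10).trans (le_of_eq (by ring)))
  · unfold majorant
    repeat first | exact le_rfl | exact le_add_self | refine le_add_right ?_
  · exact (le_of_eq (by ring)).trans ((hle 10).trans (le_of_eq (by ring)))
  · unfold majorant
    repeat first | exact le_rfl | exact le_add_self | refine le_add_right ?_
  · exact (le_of_eq (by ring)).trans ((hle 2).trans (le_of_eq (by ring)))
  · unfold majorant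
    repeat first | exact le_rfl | exact le_add_self | refine le_add_right ?_

/-! ### Partial derivatives of smooth functions -/

theorem hasDerivAt_left {v : ℝ × ℝ → ℝ} {p : ℝ × ℝ} (hv : DifferentiableAt ℝ v p) :
    HasDerivAt (fun t => v (t, p.2)) (fderiv ℝ v p (1, 0)) p.1 :=
  HasFDerivAt.comp_hasDerivAt (f := fun t : ℝ => (t, p.2)) p.1 hv.hasFDerivAt
    ((hasDerivAt_id p.1).prodMk (hasDerivAt_const p.1 p.2))

theorem hasDerivAt_right {v : ℝ × ℝ → ℝ} {p : ℝ × ℝ} (hv : DifferentiableAt ℝ v p) :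
    HasDerivAt (fun t => v (p.1, t)) (fderiv ℝ v p (0, 1)) p.2 :=
  HasFDerivAt.comp_hasDerivAt (f := fun t : ℝ => (p.1, t)) p.2 hv.hasFDerivAt
    ((hasDerivAt_const p.2 p.1).prodMk (hasDerivAt_id p.2))

theorem pderivX_eq_fderiv {v : ℝ × ℝ → ℝ} {p : ℝ × ℝ} (hv : DifferentiableAt ℝ v p) :
    pderivX v p = fderiv ℝ v p (1, 0) := (hasDerivAt_left hv).deriv

theorem pderivY_eq_fderiv {v : ℝ × ℝ → ℝ} {p : ℝ × ℝ} (hv : DifferentiableAt ℝ v p) :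
    pderivY v p = fderiv ℝ v p (0, 1) := (hasDerivAt_right hv).deriv

section Smooth

variable {U : Set (ℝ × ℝ)} {v w : ℝ × ℝ → ℝ}

theorem differentiableAt_of_contDiffOn {n : WithTop ℕ∞} (hU : IsOpen U) (hv : ContDiffOn ℝ n v U)
    (hn : n ≠ 0) {p : ℝ × ℝ} (hp : p ∈ U) : DifferentiableAt ℝ v p :=
  (hv.contDiffAt (hU.mem_nhds hp)).differentiableAt hn

theorem ContDiffOn.pderivX {m n : WithTop ℕ∞} (hU : IsOpen U) (hv : ContDiffOn ℝ n v U)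
    (hmn : m + 1 ≤ n) : ContDiffOn ℝ m (pderivX v) U := by
  have hn : n ≠ 0 := by rintro rfl; simp at hmn
  refine ((hv.fderiv_of_isOpen hU hmn).clm_apply (contDiffOn_const (c := ((1, 0) : ℝ × ℝ)))).congr
    fun p hp => ?_
  exact pderivX_eq_fderiv (differentiableAt_of_contDiffOn hU hv hn hp)

theorem ContDiffOn.pderivY {m n : WithTop ℕ∞} (hU : IsOpen U) (hv : ContDiffOn ℝ n v U)
    (hmn : m + 1 ≤ n) : ContDiffOn ℝ m (pderivY v) U := by
  have hn : n ≠ 0 := by rintro rfl; simp at hmn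
  refine ((hv.fderiv_of_isOpen hU hmn).clm_apply (contDiffOn_const (c := ((0, 1) : ℝ × ℝ)))).congr
    fun p hp => ?_
  exact pderivY_eq_fderiv (differentiableAt_of_contDiffOn hU hv hn hp)

theorem ContDiffOn.hasPX {n : WithTop ℕ∞} (hU : IsOpen U) (hS : unitSquare ⊆ U)
    (hv : ContDiffOn ℝ n v U) (hn : n ≠ 0) : HasPX v (_root_.pderivX v) := fun x hx y hy =>
  (hasDerivAt_left (p := (x, y))
    (differentiableAt_of_contDiffOn hU hv hn (hS ⟨hx, hy⟩))).differentiableAt.hasDerivAt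

theorem ContDiffOn.hasPY {n : WithTop ℕ∞} (hU : IsOpen U) (hS : unitSquare ⊆ U)
    (hv : ContDiffOn ℝ n v U) (hn : n ≠ 0) : HasPY v (_root_.pderivY v) := fun x hx y hy =>
  (hasDerivAt_right (p := (x, y))
    (differentiableAt_of_contDiffOn hU hv hn (hS ⟨hx, hy⟩))).differentiableAt.hasDerivAt

theorem Set.EqOn.pderivX (hU : IsOpen U) (h : Set.EqOn v w U) :
    Set.EqOn (pderivX v) (pderivX w) U := fun p hp => by
  refine Filter.EventuallyEq.deriv_eq ?_
  have hc : ContinuousAt (fun t : ℝ => (t, p.2)) p.1 := by fun_prop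
  filter_upwards [hc.eventually (hU.mem_nhds hp)] with t ht using h ht

theorem Set.EqOn.pderivY (hU : IsOpen U) (h : Set.EqOn v w U) :
    Set.EqOn (pderivY v) (pderivY w) U := fun p hp => by
  refine Filter.EventuallyEq.deriv_eq ?_
  have hc : ContinuousAt (fun t : ℝ => (p.1, t)) p.2 := by fun_prop
  filter_upwards [hc.eventually (hU.mem_nhds hp)] with t ht using h ht

theorem pderivX_pderivY_comm (hU : IsOpen U) (hv : ContDiffOn ℝ 2 v U) :
    Set.EqOn (pderivX (pderivY v)) (pderivY (pderivX v)) U := by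
  have hd : ∀ p ∈ U, DifferentiableAt ℝ v p := fun p hp =>
    differentiableAt_of_contDiffOn hU hv (by simp) hp
  have hf : ContDiffOn ℝ 1 (fderiv ℝ v) U := hv.fderiv_of_isOpen hU (by norm_num)
  have key : ∀ (e : ℝ × ℝ), ∀ p ∈ U, HasFDerivAt (fun q => fderiv ℝ v q e)
      ((fderiv ℝ (fderiv ℝ v) p).flip e) p := by
    intro e p hp
    have h1 : DifferentiableAt ℝ (fderiv ℝ v) p :=
      (hf.contDiffAt (hU.mem_nhds hp)).differentiableAt (by simp)
    simpa using h1.hasFDerivAt.clm_apply (hasFDerivAt_const e p)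
  intro p hp
  have hsymm : IsSymmSndFDerivAt ℝ v p :=
    (hv.contDiffAt (hU.mem_nhds hp)).isSymmSndFDerivAt (by simp)
  rw [Set.EqOn.pderivX hU (fun q hq => pderivY_eq_fderiv (hd q hq)) hp,
    Set.EqOn.pderivY hU (fun q hq => pderivX_eq_fderiv (hd q hq)) hp,
    pderivX_eq_fderiv (key _ p hp).differentiableAt, pderivY_eq_fderiv (key _ p hp).differentiableAt,
    (key _ p hp).fderiv, (key _ p hp).fderiv]
  exact hsymm _ _

theorem uxxyy_eq (hU : IsOpen U) (hv : ContDiffOn ℝ 4 v U) :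
    Set.EqOn (uxxyy v) (pderivY (pderivY (pderivX (pderivX v)))) U := by
  have hx : ContDiffOn ℝ 3 (pderivX v) U := hv.pderivX hU (by norm_num)
  have hy : ContDiffOn ℝ 3 (pderivY v) U := hv.pderivY hU (by norm_num)
  have hyx : ContDiffOn ℝ 2 (pderivY (pderivX v)) U := hx.pderivY hU (by norm_num)
  have h23 : (2 : WithTop ℕ∞) ≤ 3 := by norm_cast
  have h24 : (2 : WithTop ℕ∞) ≤ 4 := by norm_cast
  have c1 := pderivX_pderivY_comm hU (hy.of_le h23)
  have c2 := pderivX_pderivY_comm hU (hv.of_le h24)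
  have c3 := pderivX_pderivY_comm hU hyx
  have c4 := pderivX_pderivY_comm hU (hx.of_le h23)
  exact (((c1.trans (c2.pderivY hU)).pderivX hU).trans c3).trans (c4.pderivY hU)

end Smooth

/-! ### Integration over the square -/

theorem measurableSet_Omega2 : MeasurableSet Omega2 := measurableSet_Ioo.prod measurableSet_Ioo

theorem Omega2_subset : Omega2 ⊆ unitSquare :=
  Set.prod_mono Set.Ioo_subset_Icc_self Set.Ioo_subset_Icc_self

theorem measurable_omegaSq {g : ℝ × ℝ → ℝ} (hg : ContinuousOn g unitSquare) :
    Measurable (omegaSq g) := by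
  classical
  have h : ContinuousOn (fun p => ENNReal.ofReal (g p ^ 2)) Omega2 :=
    ENNReal.continuous_ofReal.comp_continuousOn ((hg.mono Omega2_subset).pow 2)
  rw [omegaSq, ← Set.piecewise_eq_indicator]
  exact h.measurable_piecewise continuousOn_const measurableSet_Omega2

theorem lintegral_omegaSq {g : ℝ × ℝ → ℝ} (hg : ContinuousOn g unitSquare) :
    ∫⁻ p, omegaSq g p = ENNReal.ofReal (L2norm g ^ 2) := by
  have hi : IntegrableOn (fun p => g p ^ 2) Omega2 :=
    ((hg.pow 2).integrableOn_compact (isCompact_Icc.prod isCompact_Icc)).mono_set Omega2_subset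
  rw [omegaSq, lintegral_indicator measurableSet_Omega2, L2norm,
    Real.sq_sqrt (integral_nonneg fun p => sq_nonneg _),
    ofReal_integral_eq_lintegral_ofReal hi (Filter.Eventually.of_forall fun p => sq_nonneg _)]

theorem ae_not_mesh (n : ℕ) (hn : 0 < n) : ∀ᵐ x : ℝ, ∀ k : ℕ, n * x ≠ k := by
  rw [ae_all_iff]
  intro k
  have hn' : (n : ℝ) ≠ 0 := by exact_mod_cast hn.ne'
  filter_upwards [Measure.ae_ne volume ((k : ℝ) / n)] with x hx h
  exact hx (by rw [← h]; field_simp)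

theorem integral_le_of_lintegral_le {α : Type*} [MeasurableSpace α] {μ : Measure α} {F : α → ℝ}
    (hF : ∀ a, 0 ≤ F a) {c : ℝ} (hc : 0 ≤ c)
    (h : ∫⁻ a, ENNReal.ofReal (F a) ∂μ ≤ ENNReal.ofReal c) : ∫ a, F a ∂μ ≤ c := by
  by_cases hm : AEStronglyMeasurable F μ
  · rw [integral_eq_lintegral_of_nonneg_ae (Filter.Eventually.of_forall hF) hm]
    exact ENNReal.toReal_le_of_le_ofReal hc h
  · rw [integral_undef fun hi => hm hi.aestronglyMeasurable]
    exact hc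

/-- With `N = M³` and `σ = M`, the two-scale interpolant satisfies
`|||u − Î_{N,N}u||| ≤ C N⁻¹ (|u|₂ + ‖∂⁴u/∂x²∂y²‖_{0,Ω})`. -/
theorem two_scale_interpolant_cube_root_bound :
    ∃ C : ℝ, 0 < C ∧ ∀ M : ℕ, 0 < M →
      ∀ u : ℝ × ℝ → ℝ, C4Near u → VanishOnBoundary u →
        energyNorm (fun p => u p - twoScale (M ^ 3) M u p) ≤
          C * ((M : ℝ) ^ 3)⁻¹ * (semi2 u + L2norm (uxxyy u)) := by
  refine ⟨22, by norm_num, fun M hM u ⟨U, hU, hS, hu⟩ _ => ?_⟩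
  have hN : 0 < M ^ 3 := by positivity
  have cx : ContDiffOn ℝ 3 (pderivX u) U := hu.pderivX hU (by norm_num)
  have cy : ContDiffOn ℝ 3 (pderivY u) U := hu.pderivY hU (by norm_num)
  have cxx : ContDiffOn ℝ 2 (pderivX (pderivX u)) U := cx.pderivX hU (by norm_num)
  have cyy : ContDiffOn ℝ 2 (pderivY (pderivY u)) U := cy.pderivY hU (by norm_num)
  have cxy : ContDiffOn ℝ 2 (pderivX (pderivY u)) U := cy.pderivX hU (by norm_num)
  have cyxx : ContDiffOn ℝ 1 (pderivY (pderivX (pderivX u))) U := cxx.pderivY hU (by norm_num)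
  have cxyy : ContDiffOn ℝ 1 (pderivX (pderivY (pderivY u))) U := cyy.pderivX hU (by norm_num)
  have c4 : ContDiffOn ℝ 0 (uxxyy u) U := cxyy.pderivX hU (by norm_num)
  have hux := hu.hasPX hU hS (by simp)
  have huy := hu.hasPY hU hS (by simp)
  have huxx := cx.hasPX hU hS (by simp)
  have huyy := cy.hasPY hU hS (by simp)
  have huyxx := cxx.hasPY hU hS (by simp)
  have huxyy := cyy.hasPX hU hS (by simp)
  have hu4 : HasPX _ (uxxyy u) := cxyy.hasPX hU hS (by simp)
  have hxy : HasPX (pderivY u) (pderivX (pderivY u)) := cy.hasPX hU hS (by simp)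
  have hxy' : HasPY (pderivX u) (pderivX (pderivY u)) := fun x hx y hy => by
    rw [pderivX_pderivY_comm hU (hu.of_le (by norm_cast)) (hS ⟨hx, hy⟩)]
    exact cx.hasPY hU hS (by simp) x hx y hy
  have hu4' : HasPY (pderivY (pderivX (pderivX u))) (uxxyy u) := fun x hx y hy => by
    rw [uxxyy_eq hU hu (hS ⟨hx, hy⟩)]
    exact cyxx.hasPY hU hS (by simp) x hx y hy
  have kxx := cxx.continuousOn.mono hS
  have kyy := cyy.continuousOn.mono hS
  have kxy := cxy.continuousOn.mono hS
  have k4 := c4.continuousOn.mono hS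
  set a := L2norm (pderivX (pderivX u)) with ha
  set b := L2norm (pderivX (pderivY u)) with hb
  set c := L2norm (pderivY (pderivY u)) with hc
  set d := L2norm (uxxyy u) with hd
  set h : ℝ := ((M : ℝ) ^ 3)⁻¹ with hh
  have hh0 : 0 ≤ h := by positivity
  have a0 : 0 ≤ a := Real.sqrt_nonneg _
  have b0 : 0 ≤ b := Real.sqrt_nonneg _
  have c0 : 0 ≤ c := Real.sqrt_nonneg _
  have d0 : 0 ≤ d := Real.sqrt_nonneg _
  have hbound : ∫ p in Omega2, ((pderivX (fun p => u p - twoScale (M ^ 3) M u p) p) ^ 2 +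
      (pderivY (fun p => u p - twoScale (M ^ 3) M u p) p) ^ 2
      + (u p - twoScale (M ^ 3) M u p) ^ 2) ≤
      75 * (h ^ 2 * (a ^ 2 + 2 * b ^ 2 + c ^ 2 + 6 * d ^ 2)) := by
    refine integral_le_of_lintegral_le (fun p => by positivity) (by positivity) ?_
    set B := majorant (M ^ 3) M (pderivX (pderivX u)) (pderivX (pderivY u))
      (pderivY (pderivY u)) (uxxyy u) with hB
    have hae : ∀ᵐ p : ℝ × ℝ, ((∀ k : ℕ, (M ^ 3 : ℕ) * p.1 ≠ k) ∧ ∀ k : ℕ, M * p.1 ≠ k) ∧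
        (∀ k : ℕ, (M ^ 3 : ℕ) * p.2 ≠ k) ∧ ∀ k : ℕ, M * p.2 ≠ k := by
      have h1 := (ae_not_mesh _ hN).and (ae_not_mesh _ hM)
      exact (Measure.quasiMeasurePreserving_fst.ae h1).and
        (Measure.quasiMeasurePreserving_snd.ae h1)
    calc _ ≤ ∫⁻ p in Omega2, 75 * (ENNReal.ofReal (h ^ 2) * B p) := by
          refine lintegral_mono_ae ?_
          filter_upwards [ae_restrict_mem measurableSet_Omega2, ae_restrict_of_ae hae]
            with p hp hm
          have e1 := twoScale_pderivX_sq_le (pderivY (pderivY u)) hux huxx huyxx hu4' hxy'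
            kxx kxy k4 hM hp hm.1.1 hm.1.2
          have e2 := twoScale_pderivY_sq_le (pderivX (pderivX u)) huy huyy huxyy hu4 hxy
            kyy kxy k4 hM hp hm.2.1 hm.2.2
          have e3 := twoScale_sq_le (pderivX (pderivY u)) hux huxx huyxx hu4' huy huyy
            kxx kyy k4 hM hp
          rw [ENNReal.ofReal_add (by positivity) (by positivity),
            ENNReal.ofReal_add (by positivity) (by positivity)]
          refine (add_le_add (add_le_add e1 e2) e3).trans (le_of_eq ?_)
          ring
      _ ≤ ∫⁻ p, 75 * (ENNReal.ofReal (h ^ 2) * B p) := setLIntegral_le_lintegral _ _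
      _ = 75 * (ENNReal.ofReal (h ^ 2) * ∫⁻ p, B p) := by
          rw [lintegral_const_mul' _ _ (by simp), lintegral_const_mul' _ _ ENNReal.ofReal_ne_top]
      _ = _ := by
          rw [hB, lintegral_majorant hN hM (measurable_omegaSq kxx) (measurable_omegaSq kxy)
            (measurable_omegaSq kyy) (measurable_omegaSq k4), lintegral_omegaSq kxx,
            lintegral_omegaSq kxy, lintegral_omegaSq kyy, lintegral_omegaSq k4,
            ENNReal.ofReal_mul (by norm_num), ENNReal.ofReal_mul (by positivity),
            ENNReal.ofReal_add (by positivity) (by positivity),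
            ENNReal.ofReal_add (by positivity) (by positivity),
            ENNReal.ofReal_add (by positivity) (by positivity),
            ENNReal.ofReal_mul (by norm_num), ENNReal.ofReal_mul (by norm_num)]
          simp [← ha, ← hb, ← hc, ← hd]
  rw [energyNorm, semi2, ← ha, ← hb, ← hc]
  refine Real.sqrt_le_iff.2 ⟨by positivity, hbound.trans ?_⟩
  have : a ^ 2 + 2 * b ^ 2 + c ^ 2 + 6 * d ^ 2 ≤ 6 * (a + b + c + d) ^ 2 := by
    nlinarith [mul_nonneg a0 b0, mul_nonneg a0 c0, mul_nonneg a0 d0, mul_nonneg b0 c0,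
      mul_nonneg b0 d0, mul_nonneg c0 d0, sq_nonneg a, sq_nonneg b, sq_nonneg c, sq_nonneg d]
  calc 75 * (h ^ 2 * (a ^ 2 + 2 * b ^ 2 + c ^ 2 + 6 * d ^ 2))
      ≤ 75 * (h ^ 2 * (6 * (a + b + c + d) ^ 2)) := by gcongr
    _ ≤ (22 * h * (a + b + c + d)) ^ 2 := by
        nlinarith [mul_nonneg (sq_nonneg h) (sq_nonneg (a + b + c + d))]
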